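/- Let A, B, C, D be m×m positive definite complex matrices with C ≤ A and D ≤ B in the Loewner order. Then C # D ≤ A # B. -/

import Mathlib

/-!
The mean `A # B` is a positive definite solution `G` of the Riccati equation `G * A⁻¹ * G = B`, and
it dominates every positive definite `X` with `X * A⁻¹ * X ≤ B`: conjugating by `A^{-1/2}` turns
the hypothesis into `Y² ≤ A^{-1/2} B A^{-1/2}` with `Y = A^{-1/2} X A^{-1/2}`, and the square root is
operator monotone. For monotonicity apply this to `X = C # D`: inversion is order-reversing, so
`X * A⁻¹ * X ≤ X * C⁻¹ * X = D ≤ B`.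
-/


open Matrix
open scoped ComplexOrder

noncomputable def matFun {m : ℕ} (f : ℝ → ℝ) (A : Matrix (Fin m) (Fin m) ℂ) :
    Matrix (Fin m) (Fin m) ℂ :=
  if hA : A.IsHermitian then
    (hA.eigenvectorUnitary : Matrix (Fin m) (Fin m) ℂ) *
      Matrix.diagonal (fun i => (f (hA.eigenvalues i) : ℂ)) *
      (star (hA.eigenvectorUnitary : Matrix (Fin m) (Fin m) ℂ))
  else 0

/-- The unique positive definite square root of a positive definite matrix
(realized via the spectral decomposition). -/
noncomputable def msqrt {m : ℕ} (A : Matrix (Fin m) (Fin m) ℂ) : Matrix (Fin m) (Fin m) ℂ :=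
  matFun Real.sqrt A

/-- The logarithm of a positive definite matrix: the unique Hermitian `L` with `exp L = A`. -/
noncomputable def mlog {m : ℕ} (A : Matrix (Fin m) (Fin m) ℂ) : Matrix (Fin m) (Fin m) ℂ :=
  matFun Real.log A

/-- The real power `A ^ t` of a positive definite matrix, via the spectral decomposition. -/
noncomputable def mpow {m : ℕ} (A : Matrix (Fin m) (Fin m) ℂ) (t : ℝ) : Matrix (Fin m) (Fin m) ℂ :=
  matFun (fun x => x ^ t) A

/-- The matrix geometric mean `A # B`. -/
noncomputable def gmean {m : ℕ} (A B : Matrix (Fin m) (Fin m) ℂ) : Matrix (Fin m) (Fin m) ℂ :=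
  msqrt A * msqrt ((msqrt A)⁻¹ * B * (msqrt A)⁻¹) * msqrt A

/-- The weighted geometric mean `A #_t B`. -/
noncomputable def wgmean {m : ℕ} (A B : Matrix (Fin m) (Fin m) ℂ) (t : ℝ) :
    Matrix (Fin m) (Fin m) ℂ :=
  msqrt A * mpow ((msqrt A)⁻¹ * B * (msqrt A)⁻¹) t * msqrt A

/-- The Frobenius (Hilbert–Schmidt) norm `‖X‖₂ = (Tr(X*X))^{1/2}`. -/
noncomputable def fnorm {m : ℕ} (X : Matrix (Fin m) (Fin m) ℂ) : ℝ :=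
  Real.sqrt ((Xᴴ * X).trace.re)

/-- The Riemannian metric `δ(A,B) = ‖log(A^{-1/2} B A^{-1/2})‖₂`. -/
noncomputable def rdist {m : ℕ} (A B : Matrix (Fin m) (Fin m) ℂ) : ℝ :=
  fnorm (mlog ((msqrt A)⁻¹ * B * (msqrt A)⁻¹))

/-- The Loewner order: `A ≤ B` iff `B - A` is positive semidefinite. -/
def Loewner {m : ℕ} (A B : Matrix (Fin m) (Fin m) ℂ) : Prop :=
  (B - A).PosSemidef

lemma msqrt_posDef {m : ℕ} {A : Matrix (Fin m) (Fin m) ℂ} (hA : A.PosDef) : (msqrt A).PosDef := by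
  have h := hA.isHermitian
  rw [msqrt, matFun, dif_pos h]
  have hU : IsUnit (h.eigenvectorUnitary : Matrix (Fin m) (Fin m) ℂ) :=
    (Unitary.toUnits h.eigenvectorUnitary).isUnit
  rw [Matrix.IsUnit.posDef_star_right_conjugate_iff hU]
  refine PosDef.diagonal fun i => ?_
  exact_mod_cast Real.sqrt_pos.2 (hA.eigenvalues_pos i)

lemma msqrt_mul_self {m : ℕ} {A : Matrix (Fin m) (Fin m) ℂ} (hA : A.PosDef) :
    msqrt A * msqrt A = A := by
  have h := hA.isHermitian
  have hs := h.spectral_theorem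
  rw [Unitary.conjStarAlgAut_apply] at hs
  rw [msqrt, matFun, dif_pos h]
  conv_rhs => rw [hs]
  have hU : star (h.eigenvectorUnitary : Matrix (Fin m) (Fin m) ℂ) *
      (h.eigenvectorUnitary : Matrix (Fin m) (Fin m) ℂ) = 1 := Unitary.coe_star_mul_self _
  set U := (h.eigenvectorUnitary : Matrix (Fin m) (Fin m) ℂ)
  set E := Matrix.diagonal (fun i => ((Real.sqrt (h.eigenvalues i) : ℝ) : ℂ)) with hE
  have hEE : E * E = Matrix.diagonal (RCLike.ofReal ∘ h.eigenvalues) := by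
    rw [hE, diagonal_mul_diagonal]
    congr 1
    funext i
    rw [← Complex.ofReal_mul, Real.mul_self_sqrt (hA.eigenvalues_pos i).le]
    rfl
  rw [← hEE]
  calc U * E * star U * (U * E * star U) = U * E * (star U * U) * E * star U := by noncomm_ring
    _ = _ := by rw [hU]; noncomm_ring

lemma conj_inv_posDef {m : ℕ} {S B : Matrix (Fin m) (Fin m) ℂ} (hS : S.PosDef) (hB : B.PosDef) :
    (S⁻¹ * B * S⁻¹).PosDef := by
  have h := (Matrix.IsUnit.posDef_star_right_conjugate_iff hS.inv.isUnit).2 hB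
  rwa [star_eq_conjTranspose, hS.inv.isHermitian.eq] at h

lemma gmean_posDef {m : ℕ} {A B : Matrix (Fin m) (Fin m) ℂ} (hA : A.PosDef) (hB : B.PosDef) :
    (gmean A B).PosDef := by
  have hS := msqrt_posDef hA
  have h := (Matrix.IsUnit.posDef_star_right_conjugate_iff hS.isUnit).2
    (msqrt_posDef (conj_inv_posDef hS hB))
  rwa [star_eq_conjTranspose, hS.isHermitian.eq] at h

/-- `A # B` solves the Riccati equation `G * A⁻¹ * G = B`. -/
lemma gmean_riccati {m : ℕ} {A B : Matrix (Fin m) (Fin m) ℂ} (hA : A.PosDef) (hB : B.PosDef) :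
    gmean A B * A⁻¹ * gmean A B = B := by
  have hS := msqrt_posDef hA
  have hAi : A⁻¹ = (msqrt A)⁻¹ * (msqrt A)⁻¹ := by
    rw [← Matrix.mul_inv_rev, msqrt_mul_self hA]
  have hT := msqrt_mul_self (conj_inv_posDef hS hB)
  have hdet := (Matrix.isUnit_iff_isUnit_det _).1 hS.isUnit
  rw [gmean, hAi]
  generalize msqrt ((msqrt A)⁻¹ * B * (msqrt A)⁻¹) = T at *
  generalize msqrt A = S at *
  have h1 := Matrix.mul_nonsing_inv S hdet
  have h2 := Matrix.nonsing_inv_mul S hdet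
  calc S * T * S * (S⁻¹ * S⁻¹) * (S * T * S)
      = S * T * (S * S⁻¹) * (S⁻¹ * S) * T * S := by noncomm_ring
    _ = S * (T * T) * S := by rw [h1, h2]; noncomm_ring
    _ = (S * S⁻¹) * B * (S⁻¹ * S) := by rw [hT]; noncomm_ring
    _ = B := by rw [h1, h2]; simp

open scoped MatrixOrder Matrix.Norms.L2Operator in
/-- Operator monotonicity of the square root, stated for squares. -/
lemma loewner_of_sq {m : ℕ} {X Y : Matrix (Fin m) (Fin m) ℂ} (hX : X.PosSemidef)
    (hY : Y.PosSemidef) (h : Loewner (X * X) (Y * Y)) : Loewner X Y := by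
  have h' : X * X ≤ Y * Y := h
  have := CFC.sqrt_le_sqrt _ _ h'
  rwa [CFC.sqrt_mul_self X hX.nonneg, CFC.sqrt_mul_self Y hY.nonneg] at this

/-- Inversion reverses the Loewner order: both inequalities are Schur complement conditions for
the block matrix with diagonal blocks `A`, `C⁻¹` and off-diagonal blocks `1`. -/
lemma loewner_inv {m : ℕ} {A C : Matrix (Fin m) (Fin m) ℂ} (hA : A.PosDef) (hC : C.PosDef)
    (h : Loewner C A) : Loewner A⁻¹ C⁻¹ := by
  have hdet := (Matrix.isUnit_iff_isUnit_det _).1 hC.isUnit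
  have : Invertible A := hA.isUnit.invertible
  have : Invertible C⁻¹ := hC.inv.isUnit.invertible
  have h1 := hA.fromBlocks₁₁ (1 : Matrix (Fin m) (Fin m) ℂ) C⁻¹
  have h2 := PosDef.fromBlocks₂₂ A (1 : Matrix (Fin m) (Fin m) ℂ) hC.inv
  simp only [conjTranspose_one, one_mul, mul_one, Matrix.nonsing_inv_nonsing_inv C hdet] at h1 h2
  exact h1.1 (h2.2 h)

lemma loewner_conj {m : ℕ} {A B K : Matrix (Fin m) (Fin m) ℂ} (hK : K.IsHermitian)
    (h : Loewner A B) : Loewner (K * A * K) (K * B * K) := by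
  have := h.mul_mul_conjTranspose_same K
  rwa [hK.eq, mul_sub, sub_mul] at this

/-- Maximality of `A # B` among the positive definite `X` with `X * A⁻¹ * X ≤ B`. -/
lemma loewner_gmean {m : ℕ} {A B X : Matrix (Fin m) (Fin m) ℂ} (hA : A.PosDef) (hB : B.PosDef)
    (hX : X.PosDef) (h : Loewner (X * A⁻¹ * X) B) : Loewner X (gmean A B) := by
  have hS := msqrt_posDef hA
  have hAi : A⁻¹ = (msqrt A)⁻¹ * (msqrt A)⁻¹ := by
    rw [← Matrix.mul_inv_rev, msqrt_mul_self hA]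
  have hM := conj_inv_posDef hS hB
  have hdet := (Matrix.isUnit_iff_isUnit_det _).1 hS.isUnit
  have h1 := loewner_conj hS.inv.isHermitian h
  have h2 : Loewner ((msqrt A)⁻¹ * X * (msqrt A)⁻¹) (msqrt ((msqrt A)⁻¹ * B * (msqrt A)⁻¹)) := by
    refine loewner_of_sq (conj_inv_posDef hS hX).posSemidef (msqrt_posDef hM).posSemidef ?_
    rw [msqrt_mul_self hM]
    convert h1 using 1
    rw [hAi]
    noncomm_ring
  have h3 := loewner_conj hS.isHermitian h2
  rw [gmean]
  convert h3 using 1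
  calc X = (msqrt A * (msqrt A)⁻¹) * X * ((msqrt A)⁻¹ * msqrt A) := by
        rw [Matrix.mul_nonsing_inv _ hdet, Matrix.nonsing_inv_mul _ hdet]; simp
    _ = _ := by noncomm_ring

/-- Monotonicity of the geometric mean in the Loewner order. -/
theorem gmean_monotone {m : ℕ} (A B C D : Matrix (Fin m) (Fin m) ℂ)
    (hA : A.PosDef) (hB : B.PosDef) (hC : C.PosDef) (hD : D.PosDef)
    (hCA : Loewner C A) (hDB : Loewner D B) :
    Loewner (gmean C D) (gmean A B) := by
  have hX := gmean_posDef hC hD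
  refine loewner_gmean hA hB hX ?_
  have h1 := loewner_conj hX.isHermitian (loewner_inv hA hC hCA)
  rw [gmean_riccati hC hD] at h1
  have h2 := PosSemidef.add h1 hDB
  rwa [add_comm, sub_add_sub_cancel] at h2
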